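/- Let π be a probability measure on [0,1]^p, let C₀* > 0, and let f, f₀ : [0,1]^p → ℝ be measurable functions with ‖f‖_∞ ≤ C₀* and ‖f₀‖_∞ ≤ C₀*. Then for every nonempty subset P ⊆ {1,…,p}, the generalized main-effect Sobol' indices satisfy |V_{P,π}(f) − V_{P,π}(f₀)| ≤ (2^{|P|} − 1) · 4C₀* · ‖f − f₀‖_{L²(π)}. -/

import Mathlib

open MeasureTheory Finset

/-- The unit hypercube `[0,1]^p`. -/
abbrev UnitCube (p : ℕ) := Fin p → Set.Icc (0 : ℝ) 1

/-- The sub-σ-algebra of `[0,1]^p` generated by the projection onto the coordinates in `P`. -/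
def coordSubAlg (p : ℕ) (P : Finset (Fin p)) : MeasurableSpace (UnitCube p) :=
  MeasurableSpace.comap (fun x (i : P) => x i) MeasurableSpace.pi

/-- The cost functional `c_{P,π}(g) = E[(E[g(X) | X_P])²] - (E[g(X)])²` for `X ∼ π`,
with `c_{∅,π}(g) := 0`. -/
noncomputable def cost {p : ℕ} (π : Measure (UnitCube p)) (P : Finset (Fin p))
    (g : UnitCube p → ℝ) : ℝ :=
  if P = ∅ then 0 else
    (∫ x, ((π[g | coordSubAlg p P]) x) ^ 2 ∂π) - (∫ x, g x ∂π) ^ 2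

/-- The generalized main-effect Sobol' index, via Möbius inversion:
`V_{P,π}(g) = ∑_{Q ⊆ P} (-1)^{|P| - |Q|} c_{Q,π}(g)`
(equivalent to the recursive definition `V_{P,π}(g) = c_{P,π}(g) - ∑_{Q ⊊ P} V_{Q,π}(g)`,
`V_{∅,π}(g) = 0`). -/
noncomputable def sobolV {p : ℕ} (π : Measure (UnitCube p)) (P : Finset (Fin p))
    (g : UnitCube p → ℝ) : ℝ :=
  ∑ Q ∈ P.powerset, (-1 : ℝ) ^ (P.card - Q.card) * cost π Q g

/-!
For every `Q` the cost `c_{Q,π}(g)` is the variance of `E[g(X) | X_Q]`. The variance is a quadratic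
form whose polarization is the covariance, so `Var U - Var W = cov(U, U - W) + cov(W, U - W)`. With
`σ` the standard deviation, Cauchy–Schwarz bounds this by `(σ(U) + σ(W)) σ(U - W)`. Conditional
expectation is linear and contracts `σ` (law of total variance), so each of the `2^|P| - 1` costs
entering `V_{P,π}` differs between `f` and `f₀` by at most `(σ(f) + σ(f₀)) σ(f - f₀)`.
-/

open ProbabilityTheory

section Variance

variable {Ω : Type*} {m₀ : MeasurableSpace Ω} {μ : Measure Ω} {X Y : Ω → ℝ}

theorem sq_covariance_le_variance_mul_variance [IsFiniteMeasure μ]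
    (hX : MemLp X 2 μ) (hY : MemLp Y 2 μ) : cov[X, Y; μ] ^ 2 ≤ Var[X; μ] * Var[Y; μ] := by
  have h_quadratic (t : ℝ) : 0 ≤ Var[X; μ] * (t * t) + 2 * cov[X, Y; μ] * t + Var[Y; μ] :=
    calc
      0 ≤ Var[t • X + Y; μ] := variance_nonneg _ _
      _ = Var[X; μ] * (t * t) + 2 * cov[X, Y; μ] * t + Var[Y; μ] := by
        rw [variance_add (hX.const_smul t) hY, variance_smul, covariance_smul_left]
        ring
  have h_discrim := discrim_le_zero h_quadratic
  rw [discrim] at h_discrim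
  linarith

theorem abs_covariance_le_sqrt_variance_mul_sqrt_variance [IsFiniteMeasure μ]
    (hX : MemLp X 2 μ) (hY : MemLp Y 2 μ) : |cov[X, Y; μ]| ≤ √Var[X; μ] * √Var[Y; μ] := by
  rw [← Real.sqrt_mul (variance_nonneg X μ)]
  exact Real.abs_le_sqrt (sq_covariance_le_variance_mul_variance hX hY)

theorem variance_sub_variance_eq_covariance_add_covariance [IsFiniteMeasure μ]
    (hX : MemLp X 2 μ) (hY : MemLp Y 2 μ) :
    Var[X; μ] - Var[Y; μ] = cov[X, X - Y; μ] + cov[Y, X - Y; μ] := by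
  rw [covariance_sub_right hX hX hY, covariance_sub_right hY hX hY,
    covariance_self hX.aemeasurable, covariance_self hY.aemeasurable, covariance_comm Y X]
  ring

theorem abs_variance_sub_variance_le [IsFiniteMeasure μ] (hX : MemLp X 2 μ) (hY : MemLp Y 2 μ) :
    |Var[X; μ] - Var[Y; μ]| ≤ (√Var[X; μ] + √Var[Y; μ]) * √Var[X - Y; μ] :=
  calc
    |Var[X; μ] - Var[Y; μ]|
    _ = |cov[X, X - Y; μ] + cov[Y, X - Y; μ]| := by
      rw [variance_sub_variance_eq_covariance_add_covariance hX hY]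
    _ ≤ |cov[X, X - Y; μ]| + |cov[Y, X - Y; μ]| := abs_add_le _ _
    _ ≤ √Var[X; μ] * √Var[X - Y; μ] + √Var[Y; μ] * √Var[X - Y; μ] :=
      add_le_add (abs_covariance_le_sqrt_variance_mul_sqrt_variance hX (hX.sub hY))
        (abs_covariance_le_sqrt_variance_mul_sqrt_variance hY (hX.sub hY))
    _ = (√Var[X; μ] + √Var[Y; μ]) * √Var[X - Y; μ] := (add_mul _ _ _).symm

theorem sqrt_variance_le_of_ae_abs_le [IsProbabilityMeasure μ] {C : ℝ} (hX : AEMeasurable X μ)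
    (hC : ∀ᵐ ω ∂μ, |X ω| ≤ C) : √Var[X; μ] ≤ C := by
  obtain ⟨ω, hω⟩ := hC.exists
  refine Real.sqrt_le_iff.mpr ⟨(abs_nonneg _).trans hω, ?_⟩
  calc
    Var[X; μ] ≤ ((C - -C) / 2) ^ 2 :=
      variance_le_sq_of_bounded (hC.mono fun _ h ↦ abs_le.mp h) hX
    _ = C ^ 2 := by ring

variable {m : MeasurableSpace Ω} [IsProbabilityMeasure μ]

theorem variance_condExp_le (hm : m ≤ m₀) (hX : MemLp X 2 μ) : Var[μ[X | m]; μ] ≤ Var[X; μ] := by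
  rw [← integral_condVar_add_variance_condExp hm hX]
  have h_condVar : 0 ≤ᵐ[μ] Var[X; μ | m] :=
    condExp_nonneg (.of_forall fun ω ↦ sq_nonneg (X ω - (μ[X | m]) ω))
  exact le_add_of_nonneg_left (integral_nonneg_of_ae h_condVar)

theorem abs_variance_condExp_sub_variance_condExp_le (hm : m ≤ m₀)
    (hX : MemLp X 2 μ) (hY : MemLp Y 2 μ) :
    |Var[μ[X | m]; μ] - Var[μ[Y | m]; μ]| ≤ (√Var[X; μ] + √Var[Y; μ]) * √Var[X - Y; μ] := by
  have h_sub : Var[μ[X | m] - μ[Y | m]; μ] = Var[μ[X - Y | m]; μ] :=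
    variance_congr
      (condExp_sub (hX.integrable one_le_two) (hY.integrable one_le_two) m).symm
  calc
    |Var[μ[X | m]; μ] - Var[μ[Y | m]; μ]|
    _ ≤ (√Var[μ[X | m]; μ] + √Var[μ[Y | m]; μ]) * √Var[μ[X | m] - μ[Y | m]; μ] :=
      abs_variance_sub_variance_le (hX.condExp one_le_two) (hY.condExp one_le_two)
    _ ≤ (√Var[X; μ] + √Var[Y; μ]) * √Var[X - Y; μ] := by
      rw [h_sub]
      gcongr
      exacts [variance_condExp_le hm hX, variance_condExp_le hm hY,
        variance_condExp_le hm (hX.sub hY)]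

end Variance

theorem abs_sum_powerset_le {α R : Type*} [Ring R] [LinearOrder R] [IsOrderedRing R]
    {P : Finset α} {F : Finset α → R} {B : R}
    (h_empty : F ∅ = 0) (h_le : ∀ Q ⊆ P, |F Q| ≤ B) :
    |∑ Q ∈ P.powerset, F Q| ≤ (2 ^ #P - 1) * B := by
  classical
  calc
    |∑ Q ∈ P.powerset, F Q|
    _ = |∑ Q ∈ P.powerset.erase ∅, F Q| := by rw [sum_erase _ h_empty]
    _ ≤ ∑ Q ∈ P.powerset.erase ∅, |F Q| := abs_sum_le_sum_abs _ _
    _ ≤ #(P.powerset.erase ∅) • B :=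
      sum_le_card_nsmul _ _ _ fun Q hQ ↦ h_le Q (mem_powerset.mp (mem_of_mem_erase hQ))
    _ = (2 ^ #P - 1) * B := by
      rw [nsmul_eq_mul, cast_card_erase_of_mem (empty_mem_powerset P), card_powerset]
      push_cast
      rfl

section Sobol

variable {p : ℕ} {π : Measure (UnitCube p)} {f f₀ : UnitCube p → ℝ}

theorem coordSubAlg_le (P : Finset (Fin p)) : coordSubAlg p P ≤ MeasurableSpace.pi :=
  Measurable.comap_le (by fun_prop)

theorem coordSubAlg_empty : coordSubAlg p ∅ = ⊥ := by
  have h_const : (fun (x : UnitCube p) (i : (∅ : Finset (Fin p))) ↦ x i) = fun _ ↦ default :=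
    funext fun _ ↦ Subsingleton.elim _ _
  rw [coordSubAlg, h_const, MeasurableSpace.comap_const]

theorem cost_empty (g : UnitCube p → ℝ) : cost π ∅ g = 0 :=
  if_pos rfl

theorem cost_eq_variance_condExp [IsProbabilityMeasure π] (hf : MemLp f 2 π)
    (P : Finset (Fin p)) : cost π P f = Var[π[f | coordSubAlg p P]; π] := by
  obtain rfl | hP := P.eq_empty_or_nonempty
  · rw [cost_empty, coordSubAlg_empty, condExp_bot,
      ← covariance_self aemeasurable_const, covariance_const_left]
  · rw [cost, if_neg hP.ne_empty, variance_eq_sub (hf.condExp one_le_two),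
      integral_condExp (coordSubAlg_le P)]
    rfl

theorem abs_cost_sub_cost_le [IsProbabilityMeasure π] (hf : MemLp f 2 π) (hf₀ : MemLp f₀ 2 π)
    (P : Finset (Fin p)) :
    |cost π P f - cost π P f₀| ≤ (√Var[f; π] + √Var[f₀; π]) * √Var[f - f₀; π] := by
  rw [cost_eq_variance_condExp hf, cost_eq_variance_condExp hf₀]
  exact abs_variance_condExp_sub_variance_condExp_le (coordSubAlg_le P) hf hf₀

theorem sobolV_sub_sobolV (P : Finset (Fin p)) :
    sobolV π P f - sobolV π P f₀ =
      ∑ Q ∈ P.powerset, (-1) ^ (#P - #Q) * (cost π Q f - cost π Q f₀) := by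
  simp only [sobolV, mul_sub, sum_sub_distrib]

theorem stmt9_general [IsProbabilityMeasure π] (hf : MemLp f 2 π) (hf₀ : MemLp f₀ 2 π)
    (P : Finset (Fin p)) :
    |sobolV π P f - sobolV π P f₀| ≤
      (2 ^ #P - 1) * (√Var[f; π] + √Var[f₀; π]) * √Var[f - f₀; π] := by
  rw [sobolV_sub_sobolV, mul_assoc]
  refine abs_sum_powerset_le (by simp only [cost_empty, sub_self, mul_zero]) fun Q _ ↦ ?_
  rw [abs_mul, abs_neg_one_pow, one_mul]
  exact abs_cost_sub_cost_le hf hf₀ Q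

end Sobol

/-- If `f, f₀ : [0,1]^p → ℝ` are measurable and bounded in supremum norm by
`C₀* > 0`, then for every nonempty `P ⊆ [p]`,
`|V_{P,π}(f) - V_{P,π}(f₀)| ≤ (2^{|P|} - 1) · 4 C₀* · ‖f - f₀‖_{L²(π)}`. -/
theorem stmt9 {p : ℕ} (π : Measure (UnitCube p)) [IsProbabilityMeasure π]
    (C₀ : ℝ) (hC₀ : 0 < C₀)
    (f f₀ : UnitCube p → ℝ) (hf : Measurable f) (hf₀ : Measurable f₀)
    (hfb : ∀ x, |f x| ≤ C₀) (hf₀b : ∀ x, |f₀ x| ≤ C₀) :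
    ∀ P : Finset (Fin p), P.Nonempty →
      |sobolV π P f - sobolV π P f₀| ≤
        ((2 : ℝ) ^ P.card - 1) * (4 * C₀) * Real.sqrt (∫ x, |f x - f₀ x| ^ 2 ∂π) := by
  intro P _
  have h_sd : √Var[f; π] + √Var[f₀; π] ≤ 4 * C₀ := by
    linarith [sqrt_variance_le_of_ae_abs_le (μ := π) hf.aemeasurable (.of_forall hfb),
      sqrt_variance_le_of_ae_abs_le (μ := π) hf₀.aemeasurable (.of_forall hf₀b)]
  have h_sub : Var[f - f₀; π] ≤ ∫ x, |f x - f₀ x| ^ 2 ∂π := by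
    simp only [sq_abs]
    exact variance_le_expectation_sq (hf.sub hf₀).aestronglyMeasurable
  have h_card : (0 : ℝ) ≤ 2 ^ #P - 1 := sub_nonneg.mpr (one_le_pow₀ one_le_two)
  refine (stmt9_general (.of_bound hf.aestronglyMeasurable C₀ (.of_forall hfb))
    (.of_bound hf₀.aestronglyMeasurable C₀ (.of_forall hf₀b)) P).trans ?_
  gcongr
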